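/- There exists n₀ ∈ ℕ such that the following holds for every integer D with n := 2^D ≥ n₀, every α ∈ (0, 0.01), every ℓ ∈ {0,1}, and every nonzero s ∈ {0,1}^D. Let X be the number of distinct values among n i.i.d. samples drawn from the mixture D^α_{ℓ,s} := α·D_{ℓ,s} + (1−α)·U_D (which samples from D_{ℓ,s} with probability α and from U_D with probability 1−α). Then Pr[ |X − (1 − e^{−1}·cosh(α))·n| > 10·√n ] < 0.01, where cosh(α) = (e^α + e^{−α})/2. -/

import Mathlib

/-- Indicator that `x` is not hit by `Y`. -/
noncomputable def missI {N : ℕ} {β : Type*} [DecidableEq β] (x : β) (Y : Fin N → β) : ℝ :=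
  ∏ i, (if Y i = x then 0 else 1)

lemma missI_eq {N : ℕ} {β : Type*} [DecidableEq β] (x : β) (Y : Fin N → β) :
    missI x Y = if x ∈ Finset.univ.image Y then 0 else 1 := by
  unfold missI
  split_ifs with h
  · obtain ⟨i, -, hi⟩ := Finset.mem_image.1 h
    exact Finset.prod_eq_zero (Finset.mem_univ i) (by simp [hi])
  · refine Finset.prod_eq_one fun i _ => ?_
    rw [if_neg]
    intro hi
    exact h (Finset.mem_image.2 ⟨i, Finset.mem_univ i, hi⟩)

lemma card_image_eq {N : ℕ} {β : Type*} [Fintype β] [DecidableEq β] (Y : Fin N → β) :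
    ((Finset.univ.image Y).card : ℝ) = Fintype.card β - ∑ x, missI x Y := by
  have h : ∀ x, missI x Y = 1 - (if x ∈ Finset.univ.image Y then (1:ℝ) else 0) := by
    intro x
    rw [missI_eq]
    split_ifs <;> simp
  simp_rw [h]
  rw [Finset.sum_sub_distrib, Finset.sum_ite_mem]
  simp

lemma second_moment {N : ℕ} {β : Type*} [Fintype β] [DecidableEq β] (p : β → ℝ)
    (hp : ∀ x, 0 ≤ p x) (hs : ∑ x, p x = 1) (h2 : ∀ x y, x ≠ y → p x + p y ≤ 1) (c : ℝ) :
    ∑ Y : Fin N → β, (∏ i, p (Y i)) * (∑ x, missI x Y - c) ^ 2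
      ≤ Fintype.card β / 4 + (∑ x, (1 - p x) ^ N - c) ^ 2 := by
  have e0 : ∑ Y : Fin N → β, (∏ i, p (Y i)) = 1 := by
    rw [← Fintype.sum_pow, hs, one_pow]
  have e1 : ∀ x, ∑ Y : Fin N → β, (∏ i, p (Y i)) * missI x Y = (1 - p x) ^ N := by
    intro x
    have : (1 - p x) = ∑ z, p z * (if z = x then 0 else 1) := by
      have : ∀ z, p z * (if z = x then (0:ℝ) else 1) = p z - if z = x then p z else 0 := by
        intro z; split_ifs <;> simp
      simp_rw [this]
      rw [Finset.sum_sub_distrib, hs]; simp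
    rw [this, Fintype.sum_pow]
    refine Finset.sum_congr rfl fun Y _ => ?_
    rw [missI, ← Finset.prod_mul_distrib]
  have e2 : ∀ x y, ∑ Y : Fin N → β, (∏ i, p (Y i)) * (missI x Y * missI y Y)
      ≤ (1 - p x) ^ N * (1 - p y) ^ N + if x = y then 1 / 4 else 0 := by
    intro x y
    by_cases hxy : x = y
    · subst hxy
      have : ∀ Y : Fin N → β, missI x Y * missI x Y = missI x Y := by
        intro Y; rw [missI_eq]; split_ifs <;> simp
      simp_rw [this]
      rw [e1]
      simp only [if_true]
      nlinarith [sq_nonneg ((1 - p x) ^ N - 1 / 2)]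
    · have h3 : (1 - p x - p y) = ∑ z, p z * ((if z = x then 0 else 1) * (if z = y then 0 else 1)) := by
        have : ∀ z, p z * ((if z = x then (0:ℝ) else 1) * (if z = y then 0 else 1))
            = p z - (if z = x then p z else 0) - if z = y then p z else 0 := by
          intro z
          by_cases h1 : z = x
          · subst h1; simp [hxy]
          · simp [h1]; split_ifs <;> simp
        simp_rw [this]
        rw [Finset.sum_sub_distrib, Finset.sum_sub_distrib, hs]; simp
      have h4 : ∑ Y : Fin N → β, (∏ i, p (Y i)) * (missI x Y * missI y Y) = (1 - p x - p y) ^ N := by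
        rw [h3, Fintype.sum_pow]
        refine Finset.sum_congr rfl fun Y _ => ?_
        rw [missI, missI, ← Finset.prod_mul_distrib, ← Finset.prod_mul_distrib]
      rw [h4, if_neg hxy, add_zero, ← mul_pow]
      have := h2 x y hxy
      refine pow_le_pow_left₀ (by linarith) ?_ N
      nlinarith [mul_nonneg (hp x) (hp y)]
  have key : ∑ Y : Fin N → β, (∏ i, p (Y i)) * (∑ x, missI x Y - c) ^ 2
      = ∑ x, ∑ y, (∑ Y : Fin N → β, (∏ i, p (Y i)) * (missI x Y * missI y Y))
        - 2 * c * ∑ x, (∑ Y : Fin N → β, (∏ i, p (Y i)) * missI x Y) + c ^ 2 := by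
    have a1 : ∑ x, ∑ y, (∑ Y : Fin N → β, (∏ i, p (Y i)) * (missI x Y * missI y Y))
        = ∑ Y : Fin N → β, (∏ i, p (Y i)) * ((∑ x, missI x Y) * ∑ y, missI y Y) := by
      have : ∀ x, ∑ y, (∑ Y : Fin N → β, (∏ i, p (Y i)) * (missI x Y * missI y Y))
        = ∑ Y : Fin N → β, ∑ y, (∏ i, p (Y i)) * (missI x Y * missI y Y) := fun x => Finset.sum_comm
      simp_rw [this]
      rw [Finset.sum_comm]
      refine Finset.sum_congr rfl fun Y _ => ?_
      rw [Finset.sum_mul_sum, Finset.mul_sum]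
      simp_rw [Finset.mul_sum]
    have a2 : ∑ x, (∑ Y : Fin N → β, (∏ i, p (Y i)) * missI x Y)
        = ∑ Y : Fin N → β, (∏ i, p (Y i)) * (∑ x, missI x Y) := by
      rw [Finset.sum_comm]
      simp_rw [Finset.mul_sum]
    have a3 : c ^ 2 = ∑ Y : Fin N → β, (∏ i, p (Y i)) * c ^ 2 := by
      rw [← Finset.sum_mul, e0, one_mul]
    rw [a1, a2, a3, Finset.mul_sum, ← Finset.sum_sub_distrib, ← Finset.sum_add_distrib]
    refine Finset.sum_congr rfl fun Y _ => ?_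
    ring
  rw [key]
  simp_rw [e1]
  have := Finset.sum_le_sum fun x (_ : x ∈ Finset.univ) =>
    Finset.sum_le_sum fun y (_ : y ∈ Finset.univ) => e2 x y
  simp_rw [Finset.sum_add_distrib] at this
  rw [← Finset.sum_mul_sum] at this
  simp only [Finset.sum_ite_eq, Finset.mem_univ, if_true, Finset.sum_const, Finset.card_univ,
    nsmul_eq_mul] at this
  nlinarith [this]

lemma sum_parity (D : ℕ) (l : ZMod 2) (s : Fin D → ZMod 2) (hs : s ≠ 0) (A B : ℝ) :
    ∑ x : Fin D → ZMod 2, (if ∑ i, x i * s i = l then A else B) = (A + B) / 2 * 2 ^ D := by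
  obtain ⟨j, hj⟩ : ∃ j, s j ≠ 0 := by
    by_contra! h
    exact hs (funext h)
  have hj1 : s j = 1 := by
    revert hj; generalize s j = t; revert t; decide
  have h1 : ∑ x : Fin D → ZMod 2, (if ∑ i, x i * s i = l then A else B)
      = ∑ x : Fin D → ZMod 2, (if ∑ i, x i * s i = l then B else A) := by
    rw [← Equiv.sum_comp (Equiv.addRight (Pi.single j (1 : ZMod 2)))]
    refine Finset.sum_congr rfl fun x _ => ?_
    have : ∑ i, (Equiv.addRight (Pi.single j (1 : ZMod 2)) x) i * s i = ∑ i, x i * s i + 1 := by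
      simp [add_mul, Finset.sum_add_distrib, Pi.single_apply, hj1]
    rw [this]
    generalize ∑ i, x i * s i = t
    have h : ∀ t l : ZMod 2, (t + 1 = l) ↔ ¬ (t = l) := by decide
    by_cases ht : t = l
    · rw [if_pos ht, if_neg]; rw [h]; simpa using ht
    · rw [if_neg ht, if_pos]; rw [h]; exact ht
  have h2 : ∑ x : Fin D → ZMod 2, (if ∑ i, x i * s i = l then A else B)
      + ∑ x : Fin D → ZMod 2, (if ∑ i, x i * s i = l then B else A) = (A + B) * 2 ^ D := by
    rw [← Finset.sum_add_distrib]
    have : ∀ x : Fin D → ZMod 2, ((if ∑ i, x i * s i = l then A else B)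
      + (if ∑ i, x i * s i = l then B else A)) = A + B := by
      intro x; split_ifs <;> ring
    simp_rw [this]
    simp [ZMod.card, mul_comm]
    ring
  linarith

lemma pow_approx (N : ℕ) (hN : 2 ≤ N) (t : ℝ) (h0 : 0 ≤ t) (h1 : t ≤ 1.01) :
    |(1 - t / N) ^ N - Real.exp (-t)| ≤ 1.03 / N := by
  have hN' : (2 : ℝ) ≤ N := by exact_mod_cast hN
  have hNp : (0 : ℝ) < N := by linarith
  set u := t / N with hu
  have hu0 : 0 ≤ u := by positivity
  have hu1 : u ≤ 1 := by rw [hu, div_le_one hNp]; linarith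
  have hb : 1 - u ≤ Real.exp (-u) := by linarith [Real.add_one_le_exp (-u)]
  have ha1 : Real.exp (-u) ≤ 1 := Real.exp_le_one_iff.2 (by linarith)
  have hq : Real.exp (-u) - (1 - u) ≤ u ^ 2 := by
    have := Real.abs_exp_sub_one_sub_id_le (x := -u) (by rw [abs_neg, abs_of_nonneg hu0]; exact hu1)
    have := (abs_le.1 this).2
    nlinarith
  have he : Real.exp (-t) = Real.exp (-u) ^ N := by
    rw [← Real.exp_nat_mul]; congr 1; rw [hu]; field_simp
  have gen : ∀ (a b : ℝ), 0 ≤ b → b ≤ a → a ≤ 1 → ∀ n : ℕ, a ^ n - b ^ n ≤ n * (a - b) := by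
    intro a b hb hab ha n
    induction n with
    | zero => simp
    | succ k ih =>
      have hbk : b ^ k ≤ 1 := pow_le_one₀ hb (hab.trans ha)
      have hbk0 : 0 ≤ b ^ k := pow_nonneg hb k
      have hk : b ^ k ≤ a ^ k := pow_le_pow_left₀ hb hab k
      push_cast
      rw [pow_succ, pow_succ]
      nlinarith [mul_nonneg (sub_nonneg.2 hk) (sub_nonneg.2 ha),
        mul_nonneg (sub_nonneg.2 hbk) (sub_nonneg.2 hab)]
  have g := gen _ _ (by linarith : 0 ≤ 1 - u) hb ha1 N
  have m : (1 - u) ^ N ≤ Real.exp (-u) ^ N := pow_le_pow_left₀ (by linarith) hb N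
  rw [he, abs_sub_comm, abs_of_nonneg (by linarith)]
  have : (N : ℝ) * (Real.exp (-u) - (1 - u)) ≤ N * u ^ 2 := by gcongr
  have h3 : (N : ℝ) * u ^ 2 = t ^ 2 / N := by rw [hu]; field_simp
  have h4 : t ^ 2 / N ≤ 1.03 / N := by gcongr; nlinarith
  linarith


/-- The uniform distribution on `{0,1}^D`. -/
noncomputable def unifD (D : ℕ) : (Fin D → ZMod 2) → ℝ := fun _ => ((2 : ℝ) ^ D)⁻¹

/-- The uniform distribution on `{x ∈ {0,1}^D : ⟨x,s⟩ = l (mod 2)}`. -/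
noncomputable def parityD (D : ℕ) (l : ZMod 2) (s : Fin D → ZMod 2) :
    (Fin D → ZMod 2) → ℝ :=
  fun x => if ∑ i, x i * s i = l then 2 * ((2 : ℝ) ^ D)⁻¹ else 0

/-- The mixture `D^α_{l,s} = α·D_{l,s} + (1−α)·U_D`. -/
noncomputable def mixD (D : ℕ) (α : ℝ) (l : ZMod 2) (s : Fin D → ZMod 2) :
    (Fin D → ZMod 2) → ℝ :=
  fun x => α * parityD D l s x + (1 - α) * unifD D x

/-- concentration of the number of distinct elements among
`n = 2^D` i.i.d. samples from `D^α_{l,s}`. -/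
theorem stmt_11 :
    ∃ n₀ : ℕ, ∀ D : ℕ, n₀ ≤ 2 ^ D → ∀ α : ℝ, 0 < α → α < 0.01 →
      ∀ l : ZMod 2, ∀ s : Fin D → ZMod 2, s ≠ 0 →
        ∑ Y : Fin (2 ^ D) → (Fin D → ZMod 2),
            (if 10 * Real.sqrt ((2 : ℝ) ^ D) <
                |((Finset.univ.image Y).card : ℝ) -
                  (1 - Real.exp (-1) * Real.cosh α) * (2 : ℝ) ^ D| then
              ∏ i, mixD D α l s (Y i) else 0)
          < 0.01 := by
  refine ⟨16, fun D hD α hα0 hα1 l s hs => ?_⟩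
  norm_num at hα1
  set n : ℝ := (2 : ℝ) ^ D with hn
  have hn16 : (16 : ℝ) ≤ n := by rw [hn]; exact_mod_cast hD
  have hnp : 0 < n := by linarith
  have hcast : ((2 ^ D : ℕ) : ℝ) = n := by push_cast; rfl
  have hp : ∀ x, mixD D α l s x = if ∑ i, x i * s i = l then (1 + α) / n else (1 - α) / n := by
    intro x
    simp only [mixD, parityD, unifD, ← hn]
    split_ifs <;> field_simp <;> ring
  have hp0 : ∀ x, 0 ≤ mixD D α l s x := by
    intro x; rw [hp]; split_ifs
    · positivity
    · exact div_nonneg (by linarith) hnp.le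
  have hp1 : ∀ x, mixD D α l s x ≤ 1 / 2 := by
    intro x; rw [hp]; split_ifs <;> rw [div_le_iff₀ hnp] <;> linarith
  have hsum : ∑ x, mixD D α l s x = 1 := by
    simp_rw [hp]
    rw [sum_parity D l s hs, ← hn]
    field_simp; ring
  have hcard : (Fintype.card (Fin D → ZMod 2) : ℝ) = n := by simp [ZMod.card, hn]
  set c : ℝ := Real.exp (-1) * Real.cosh α * n with hc
  have hmean : |∑ x, (1 - mixD D α l s x) ^ (2 ^ D) - c| ≤ 1.03 := by
    have e : ∀ x, (1 - mixD D α l s x) ^ (2 ^ D) = if ∑ i, x i * s i = l then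
        (1 - (1 + α) / n) ^ (2 ^ D) else (1 - (1 - α) / n) ^ (2 ^ D) := by
      intro x; rw [hp]; split_ifs <;> rfl
    simp_rw [e]
    rw [sum_parity D l s hs, ← hn]
    have b1 := pow_approx (2 ^ D) (by omega) (1 + α) (by linarith) (by norm_num; linarith)
    have b2 := pow_approx (2 ^ D) (by omega) (1 - α) (by linarith) (by norm_num; linarith)
    rw [hcast] at b1 b2
    have hc' : c = (Real.exp (-(1 + α)) + Real.exp (-(1 - α))) / 2 * n := by
      rw [hc, Real.cosh_eq, show -(1 + α) = -1 + -α by ring, show -(1 - α) = -1 + α by ring,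
        Real.exp_add, Real.exp_add]
      ring
    rw [hc']
    rw [abs_le] at b1 b2 ⊢
    have hd : 1.03 / n * n = 1.03 := by field_simp
    constructor
    · nlinarith [mul_le_mul_of_nonneg_right b1.1 hnp.le, mul_le_mul_of_nonneg_right b2.1 hnp.le]
    · nlinarith [mul_le_mul_of_nonneg_right b1.2 hnp.le, mul_le_mul_of_nonneg_right b2.2 hnp.le]
  have hsm := second_moment (N := 2 ^ D) (mixD D α l s) hp0 hsum
    (fun x y _ => by linarith [hp1 x, hp1 y]) c
  rw [hcard] at hsm
  have hm2 : (∑ x, (1 - mixD D α l s x) ^ (2 ^ D) - c) ^ 2 ≤ 1.03 ^ 2 := by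
    rw [← sq_abs]; gcongr
  have hle : ∑ Y : Fin (2 ^ D) → (Fin D → ZMod 2),
            (if 10 * Real.sqrt n <
                |((Finset.univ.image Y).card : ℝ) -
                  (1 - Real.exp (-1) * Real.cosh α) * n| then
              ∏ i, mixD D α l s (Y i) else 0)
      ≤ ∑ Y : Fin (2 ^ D) → (Fin D → ZMod 2),
        ((∏ i, mixD D α l s (Y i)) * (∑ x, missI x Y - c) ^ 2) / (100 * n) := by
    refine Finset.sum_le_sum fun Y _ => ?_
    have hP : 0 ≤ ∏ i, mixD D α l s (Y i) := Finset.prod_nonneg fun i _ => hp0 _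
    split_ifs with h
    · rw [card_image_eq, hcard, show n - ∑ x, missI x Y - (1 - Real.exp (-1) * Real.cosh α) * n
        = -(∑ x, missI x Y - c) by rw [hc]; ring, abs_neg] at h
      have h2 : 100 * n ≤ (∑ x, missI x Y - c) ^ 2 := by
        rw [← sq_abs (∑ x, missI x Y - c)]
        have := pow_le_pow_left₀ (by positivity) h.le 2
        rw [mul_pow, Real.sq_sqrt hnp.le] at this
        linarith
      rw [le_div_iff₀ (by positivity)]
      gcongr
    · positivity
  refine lt_of_le_of_lt hle ?_
  rw [← Finset.sum_div, div_lt_iff₀ (by positivity)]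
  norm_num at hm2 ⊢
  linarith
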